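/- For every integer n ≥ 0, p(49n+40) ≡ 0 (mod 49). -/

import Mathlib

/-- The partition function `p(n)`: the number of partitions of `n`. -/
def p (n : ℕ) : ℕ := Fintype.card (Nat.Partition n)

open PowerSeries

/-- finite Euler product -/
noncomputable def eu (n : ℕ) : ℤ⟦X⟧ := ∏ i ∈ Finset.range n, (1 - X ^ (i + 1))

lemma eu_succ (n : ℕ) : eu (n + 1) = eu n * (1 - X ^ (n + 1)) := by
  simp [eu, Finset.prod_range_succ]

lemma eu_zero : eu 0 = 1 := by simp [eu]

/-- triangular numbers -/
def tri : ℕ → ℕ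
  | 0 => 0
  | j + 1 => tri j + (j + 1)

lemma two_tri (j : ℕ) : 2 * tri j = j * (j + 1) := by
  induction j with
  | zero => rfl
  | succ j ih => simp only [tri]; linarith

/-- signed, shifted q-binomials -/
noncomputable def bb : ℕ → ℕ → ℤ⟦X⟧
  | 0, 0 => 1
  | 0, _ + 1 => 0
  | n + 1, 0 => (1 + X ^ (n + 1) + (X ^ (n + 1)) ^ 2) * bb n 0 - X ^ (n + 1) * bb n 1
  | n + 1, j + 1 => (1 + (X ^ (n + 1)) ^ 2) * bb n (j + 1) - X ^ (n + 1) * (bb n j + bb n (j + 2))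

lemma bb_zero (n j : ℕ) (h : n < j) : bb n j = 0 := by
  induction n generalizing j with
  | zero => cases j with
    | zero => omega
    | succ j => simp [bb]
  | succ n ih => cases j with
    | zero => omega
    | succ j =>
      rw [bb, ih _ (by omega), ih _ (by omega), ih _ (by omega)]; simp

lemma bb_closed (n : ℕ) : ∀ d j : ℕ, j + d = n →
    eu d * eu (d + 2 * j + 1) * bb n j = (-1) ^ j * X ^ (tri j) * eu (2 * n + 1) := by
  induction n with
  | zero =>
    intro d j h
    obtain rfl : d = 0 := by omega
    obtain rfl : j = 0 := by omega
    simp [bb, tri, eu_zero]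
  | succ n ih =>
    intro d j h
    have e2 : eu (2 * (n + 1) + 1) = eu (2 * n + 1) * (1 - X ^ (2 * n + 2)) * (1 - X ^ (2 * n + 3)) := by
      rw [show 2 * (n + 1) + 1 = (2 * n + 1 + 1) + 1 by ring, eu_succ, eu_succ]
    rw [e2]
    cases j with
    | zero =>
      obtain rfl : d = n + 1 := by omega
      rw [bb]
      have h0 := ih n 0 (by omega)
      have h1 : eu (n + 1) * eu (n + 2) * bb n 1 =
          - X * (1 - X ^ (n + 1)) * (1 - X ^ n) * eu (2 * n + 1) := by
        cases n with
        | zero => simp [bb]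
        | succ m =>
          have := ih m 1 (by omega)
          rw [eu_succ (m+1), eu_succ m]
          simp only [tri] at this
          rw [show m + 2 * 1 + 1 = m + 1 + 2 by ring] at this
          linear_combination (1 - X ^ (m + 1 + 1)) * (1 - X ^ (m + 1)) * this
      simp only [tri] at h0 ⊢
      simp only [mul_zero, add_zero, pow_zero] at h0 ⊢
      rw [eu_succ (n+1)] at h1 ⊢
      rw [eu_succ n] at h1 ⊢
      rw [eu_succ n] at h0
      linear_combination (1 + X ^ (n + 1) + (X ^ (n + 1)) ^ 2) * (1 - X ^ (n + 1)) * (1 - X ^ (n+2)) * h0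
        - X ^ (n + 1) * h1
    | succ j =>
      obtain rfl : n = j + d := by omega
      rw [bb]
      have h0 := ih d j rfl
      have h1 : eu d * eu (d + 2 * j + 2) * bb (j + d) (j + 1) =
          (1 - X ^ d) * ((-1) ^ (j+1) * X ^ tri (j + 1) * eu (2 * (j + d) + 1)) := by
        cases d with
        | zero => rw [bb_zero _ _ (by omega)]; simp
        | succ m =>
          have := ih m (j + 1) (by omega)
          rw [eu_succ m]
          rw [show m + 2 * (j + 1) + 1 = m + 1 + 2 * j + 2 by ring] at this
          linear_combination (1 - X ^ (m + 1)) * this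
      have h2 : X * (eu d * eu (d + 2 * j + 3) * bb (j + d) (j + 2)) =
          (1 - X ^ d) * (X - X ^ d) * ((-1) ^ (j+2) * X ^ tri (j + 2) * eu (2 * (j + d) + 1)) := by
        rcases d with _ | _ | m
        · rw [bb_zero _ _ (by omega)]; simp
        · rw [bb_zero _ _ (by omega)]; simp
        · have := ih m (j + 2) (by omega)
          rw [eu_succ (m+1), eu_succ m]
          rw [show m + 2 * (j + 2) + 1 = m + 1 + 1 + 2 * j + 3 by ring] at this
          linear_combination X * (1 - X ^ (m + 1)) * (1 - X ^ (m + 1 + 1)) * this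
      have hX : (X : ℤ⟦X⟧) ≠ 0 := X_ne_zero
      apply mul_left_cancel₀ hX
      rw [show d + 2 * (j + 1) + 1 = d + 2 * j + 3 by ring]
      rw [eu_succ (d + 2 * j + 2)] at h2 ⊢
      rw [eu_succ (d + 2 * j + 1)] at h1 h2 ⊢
      simp only [tri] at h1 h2 ⊢
      linear_combination X * (1 + (X ^ (j + d + 1)) ^ 2) * (1 - X ^ (d + 2 * j + 3)) * h1
        - X ^ (j + d + 1) * h2
        - X * X ^ (j + d + 1) * (1 - X ^ (d + 2 * j + 2)) * (1 - X ^ (d + 2 * j + 3)) * h0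

lemma bb_sum_aux (n M : ℕ) : ∑ j ∈ Finset.range (M + 1), (2 * (j : ℤ⟦X⟧) + 1) * bb (n + 1) j =
    (1 - X ^ (n + 1)) ^ 2 * ∑ j ∈ Finset.range (M + 1), (2 * (j : ℤ⟦X⟧) + 1) * bb n j
    + X ^ (n + 1) * ((2 * (M : ℤ⟦X⟧) + 3) * bb n M - (2 * (M : ℤ⟦X⟧) + 1) * bb n (M + 1)) := by
  induction M with
  | zero => simp [bb]; ring
  | succ M ih =>
    rw [Finset.sum_range_succ, ih, Finset.sum_range_succ _ (M + 1), bb]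
    push_cast
    ring

lemma bb_sum (n : ℕ) : ∑ j ∈ Finset.range (n + 1), (2 * (j : ℤ⟦X⟧) + 1) * bb n j = eu n ^ 2 := by
  induction n with
  | zero => simp [bb, eu]
  | succ n ih =>
    rw [bb_sum_aux, Finset.sum_range_succ, ih, bb_zero n (n + 1) (by omega),
      bb_zero n (n + 1 + 1) (by omega), eu_succ]
    ring

/-- Euler's function -/
noncomputable abbrev ef : ℤ⟦X⟧ := pentagonalSeries ℤ

lemma eu_dvd (n m : ℕ) (h : n ≤ m) : X ^ (n + 1) ∣ eu m - eu n := by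
  induction m, h using Nat.le_induction with
  | base => simp
  | succ m h ih =>
    rw [eu_succ]
    have : (X : ℤ⟦X⟧) ^ (n + 1) ∣ X ^ (m + 1) := pow_dvd_pow _ (by omega)
    have h2 := dvd_sub ih (Dvd.dvd.mul_left this (eu m))
    convert h2 using 1; ring

lemma ef_dvd (n : ℕ) : X ^ (n + 1) ∣ ef - eu n := by
  rw [X_pow_dvd_iff]
  intro m hm
  obtain ⟨s, hs⟩ := (Filter.eventually_atTop.1 (coeff_prod_one_sub_X_pow_eventually_eq ℤ m))
  obtain ⟨M, hM⟩ := s.exists_nat_subset_range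
  have h1 := hs (Finset.range (M + n)) (hM.trans (by intro x; simp; omega))
  have h2 := X_pow_dvd_iff.1 (eu_dvd n (M + n) (by omega)) m hm
  rw [map_sub] at h2 ⊢
  rw [← h1]
  exact h2

lemma eu_const (n : ℕ) : constantCoeff (eu n) = 1 := by
  induction n with
  | zero => simp [eu]
  | succ n ih => rw [eu_succ, map_mul, ih]; simp

lemma eu_unit (n : ℕ) : IsUnit (eu n) := by
  rw [PowerSeries.isUnit_iff_constantCoeff, eu_const]; exact isUnit_one

lemma ef_mul_bb (d j : ℕ) : X ^ (tri j + d + 1) ∣ ef * bb (j + d) j - (-1) ^ j * X ^ tri j := by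
  have hc := bb_closed (j + d) d j rfl
  have hu := (eu_unit d).mul (eu_unit (d + 2 * j + 1))
  rw [← hu.dvd_mul_left]
  have h1 : (X : ℤ⟦X⟧) ^ (d + 1) ∣ ef * eu (2 * (j + d) + 1) - eu d * eu (d + 2 * j + 1) := by
    have a1 := ef_dvd d
    have a2 := eu_dvd d (2 * (j + d) + 1) (by omega)
    have a3 := eu_dvd d (d + 2 * j + 1) (by omega)
    have := dvd_sub (dvd_add (a1.mul_right (eu (2 * (j + d) + 1))) (a2.mul_left (eu d)))
      (a3.mul_left (eu d))
    convert this using 1; ring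
  obtain ⟨t, ht⟩ := h1
  refine ⟨(-1) ^ j * t, ?_⟩
  linear_combination ef * hc + (-1) ^ j * X ^ tri j * ht

lemma le_tri (j : ℕ) : j ≤ tri j := by
  cases j <;> simp [tri]

lemma jacobi (n : ℕ) : X ^ (n + 1) ∣ ef ^ 3 -
    ∑ j ∈ Finset.range (n + 1), (2 * (j : ℤ⟦X⟧) + 1) * ((-1) ^ j * X ^ tri j) := by
  have h1 : X ^ (n + 1) ∣ ef * eu n ^ 2 -
    ∑ j ∈ Finset.range (n + 1), (2 * (j : ℤ⟦X⟧) + 1) * ((-1) ^ j * X ^ tri j) := by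
    rw [← bb_sum, Finset.mul_sum, ← Finset.sum_sub_distrib]
    refine Finset.dvd_sum fun j hj => ?_
    have hj : j ≤ n := by simpa [Nat.lt_succ_iff] using hj
    obtain ⟨d, rfl⟩ := Nat.exists_eq_add_of_le hj
    have := (ef_mul_bb d j).mul_left (2 * (j : ℤ⟦X⟧) + 1)
    refine (pow_dvd_pow X (?_ : j + d + 1 ≤ tri j + d + 1)).trans ?_
    · have := le_tri j; omega
    · convert this using 1; ring
  have h2 := (ef_dvd n).mul_left (ef * (ef + eu n))
  convert dvd_add h1 h2 using 1; ring

lemma coeff_jacobi (n : ℕ) : coeff n (ef ^ 3) =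
    ∑ j ∈ Finset.range (n + 1), if n = tri j then (2 * (j : ℤ) + 1) * (-1) ^ j else 0 := by
  have h := X_pow_dvd_iff.1 (jacobi n) n (by omega)
  rw [map_sub, sub_eq_zero] at h
  rw [h, map_sum]
  refine Finset.sum_congr rfl fun j _ => ?_
  have : (2 * (j : ℤ⟦X⟧) + 1) * ((-1) ^ j * X ^ tri j)
      = C ((2 * (j : ℤ) + 1) * (-1) ^ j) * X ^ tri j := by
    simp [mul_assoc]
  rw [this, coeff_C_mul, coeff_X_pow]
  simp

lemma tri_mod (j : ℕ) : tri j % 7 = 0 ∨ tri j % 7 = 1 ∨ tri j % 7 = 3 ∨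
    (tri j % 7 = 6 ∧ (2 * j + 1) % 7 = 0) := by
  have h := two_tri j
  have h2 : (2 * tri j) % 7 = ((j % 7) * (j % 7 + 1)) % 7 := by
    rw [h, Nat.mul_mod, Nat.add_mod]; simp [Nat.mul_mod]
  have : j % 7 < 7 := Nat.mod_lt _ (by norm_num)
  generalize hr : j % 7 = r at *
  interval_cases r <;> omega

lemma jac_zero (n : ℕ) (h : n % 7 = 2 ∨ n % 7 = 4 ∨ n % 7 = 5) : coeff n (ef ^ 3) = 0 := by
  rw [coeff_jacobi]
  refine Finset.sum_eq_zero fun j _ => ?_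
  rw [if_neg]
  rintro rfl
  have := tri_mod j
  omega

lemma jac_six (n : ℕ) (h : n % 7 = 6) : (7 : ℤ) ∣ coeff n (ef ^ 3) := by
  rw [coeff_jacobi]
  refine Finset.dvd_sum fun j _ => ?_
  split_ifs with h1
  · have := tri_mod j
    refine Dvd.dvd.mul_right ?_ _
    omega
  · simp

section proj
variable {R : Type*} [CommRing R]

/-- the part of a power series supported on exponents congruent to `r` modulo 7 -/
noncomputable def pr (r : ℕ) : R⟦X⟧ →ₗ[R] R⟦X⟧ where
  toFun φ := PowerSeries.mk fun n => if n % 7 = r then coeff n φ else 0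
  map_add' a b := by ext n; simp only [coeff_mk, map_add]; split_ifs <;> simp
  map_smul' c a := by ext n; simp

lemma coeff_pr (r n : ℕ) (φ : R⟦X⟧) : coeff n (pr r φ) = if n % 7 = r then coeff n φ else 0 := by
  simp [pr]

/-- support in a residue class -/
def Supp (r : ℕ) (φ : R⟦X⟧) : Prop := ∀ n, n % 7 ≠ r → coeff n φ = 0

lemma supp_pr (r : ℕ) (φ : R⟦X⟧) : Supp r (pr r φ) := by
  intro n h; rw [coeff_pr, if_neg h]

lemma Supp.mul {r s : ℕ} {φ ψ : R⟦X⟧} (h : Supp r φ) (k : Supp s ψ) :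
    Supp ((r + s) % 7) (φ * ψ) := by
  intro n hn
  rw [coeff_mul]
  refine Finset.sum_eq_zero fun ij hij => ?_
  rw [Finset.HasAntidiagonal.mem_antidiagonal] at hij
  by_cases h1 : ij.1 % 7 = r
  · rw [k ij.2 (by rintro rfl; apply hn; rw [← hij, ← h1, ← Nat.add_mod]), mul_zero]
  · rw [h _ h1, zero_mul]

lemma supp_one : Supp 0 (1 : R⟦X⟧) := by
  intro n h
  rw [coeff_one, if_neg]; rintro rfl; simp at h

lemma Supp.pow {r : ℕ} {φ : R⟦X⟧} (h : Supp r φ) (n : ℕ) : Supp ((n * r) % 7) (φ ^ n) := by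
  induction n with
  | zero => simpa using supp_one
  | succ n ih =>
    rw [pow_succ]
    have := ih.mul h
    rwa [Nat.mod_add_mod, ← Nat.succ_mul] at this

lemma Supp.add {r : ℕ} {φ ψ : R⟦X⟧} (h : Supp r φ) (k : Supp r ψ) : Supp r (φ + ψ) := by
  intro n hn; rw [map_add, h n hn, k n hn, add_zero]

lemma Supp.pr {r : ℕ} {φ : R⟦X⟧} (h : Supp r φ) (s : ℕ) : pr s φ = if r = s then φ else 0 := by
  ext n
  rw [coeff_pr]
  split_ifs with h1 h2 h2
  · rfl
  · rw [h n (by omega)]; simp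
  · rw [h n (by omega)]
  · simp

lemma pr_mul {E : R⟦X⟧} (hE : Supp 0 E) (r : ℕ) (φ : R⟦X⟧) : pr r (E * φ) = E * pr r φ := by
  ext n
  rw [coeff_pr, coeff_mul, coeff_mul]
  split_ifs with h
  · refine Finset.sum_congr rfl fun ij hij => ?_
    rw [Finset.HasAntidiagonal.mem_antidiagonal] at hij
    rw [coeff_pr]
    by_cases h1 : ij.1 % 7 = 0
    · rw [if_pos (by omega)]
    · rw [hE _ h1]; simp
  · symm
    refine Finset.sum_eq_zero fun ij hij => ?_
    rw [Finset.HasAntidiagonal.mem_antidiagonal] at hij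
    rw [coeff_pr]
    by_cases h1 : ij.1 % 7 = 0
    · rw [if_neg (by omega), mul_zero]
    · rw [hE _ h1]; simp

lemma supp_mon {x y z : R⟦X⟧} (hx : Supp 0 x) (hy : Supp 1 y) (hz : Supp 3 z) (i j k : ℕ) :
    Supp ((j + 3 * k) % 7) (x ^ i * y ^ j * z ^ k) := by
  have := ((hx.pow i).mul (hy.pow j)).mul (hz.pow k)
  convert this using 1
  omega

lemma pr_mon {x y z : R⟦X⟧} (hx : Supp 0 x) (hy : Supp 1 y) (hz : Supp 3 z) (i j k r : ℕ) :
    pr r (x ^ i * y ^ j * z ^ k) = if (j + 3 * k) % 7 = r then x ^ i * y ^ j * z ^ k else 0 :=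
  (supp_mon hx hy hz i j k).pr r

/-- monomials -/
noncomputable def mo (x y z : R⟦X⟧) (c : ℤ) (i j k : ℕ) : R⟦X⟧ := c • (x ^ i * y ^ j * z ^ k)

lemma pr_mo {x y z : R⟦X⟧} (hx : Supp 0 x) (hy : Supp 1 y) (hz : Supp 3 z) (c : ℤ) (i j k r : ℕ) :
    pr r (mo x y z c i j k) = if (j + 3 * k) % 7 = r then mo x y z c i j k else 0 := by
  rw [mo, map_zsmul, pr_mon hx hy hz]
  split_ifs <;> simp

/-- the Klein quartic -/
noncomputable def kle (x y z : R⟦X⟧) : R⟦X⟧ := 2 * x * y ^ 3 + x ^ 3 * z + 4 * y * z ^ 3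

/-- the polynomial `((x+y+z)^7 - x^7 - y^7 - z^7)/7` -/
noncomputable def kk (x y z : R⟦X⟧) : R⟦X⟧ :=
    1*x^6*y^1*z^0 + 1*x^6*y^0*z^1 + 3*x^5*y^2*z^0 + 6*x^5*y^1*z^1 + 3*x^5*y^0*z^2 +
    5*x^4*y^3*z^0 + 15*x^4*y^2*z^1 + 15*x^4*y^1*z^2 + 5*x^4*y^0*z^3 + 5*x^3*y^4*z^0 +
    20*x^3*y^3*z^1 + 30*x^3*y^2*z^2 + 20*x^3*y^1*z^3 + 5*x^3*y^0*z^4 + 3*x^2*y^5*z^0 +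
    15*x^2*y^4*z^1 + 30*x^2*y^3*z^2 + 30*x^2*y^2*z^3 + 15*x^2*y^1*z^4 + 3*x^2*y^0*z^5 +
    1*x^1*y^6*z^0 + 6*x^1*y^5*z^1 + 15*x^1*y^4*z^2 + 20*x^1*y^3*z^3 + 15*x^1*y^2*z^4 +
    6*x^1*y^1*z^5 + 1*x^1*y^0*z^6 + 1*x^0*y^6*z^1 + 3*x^0*y^5*z^2 + 5*x^0*y^4*z^3 +
    5*x^0*y^3*z^4 + 3*x^0*y^2*z^5 + 1*x^0*y^1*z^6

/-- degree nine polynomial -/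
noncomputable def hh (x y z : R⟦X⟧) : R⟦X⟧ :=
    36*x^6*y^2*z^1 + 18*x^5*y^0*z^4 + 18*x^4*y^5*z^0 + 240*x^3*y^3*z^3 + 36*x^2*y^1*z^6 +
    36*x^1*y^6*z^2 + 18*x^0*y^4*z^5

lemma kk_spec (x y z : R⟦X⟧) : (x + y + z) ^ 7 = x ^ 7 + y ^ 7 + z ^ 7 + 7 * kk x y z := by
  rw [kk]; ring

lemma pr_sq {x y z : R⟦X⟧} (hx : Supp 0 x) (hy : Supp 1 y) (hz : Supp 3 z) :
    pr 5 ((x + y + z) ^ 2) = 0 := by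
  have : (x + y + z) ^ 2 =
    mo x y z 1 2 0 0 + mo x y z 2 1 1 0 + mo x y z 2 1 0 1 +
    mo x y z 1 0 2 0 + mo x y z 2 0 1 1 + mo x y z 1 0 0 2 := by
    simp only [mo, zsmul_eq_mul]; push_cast; ring
  rw [this]
  simp only [map_add, pr_mo hx hy hz]
  norm_num

set_option maxHeartbeats 2000000 in
lemma pr_sk {x y z : R⟦X⟧} (hx : Supp 0 x) (hy : Supp 1 y) (hz : Supp 3 z) :
    pr 5 ((x + y + z) ^ 2 * kk x y z) = hh x y z := by
  have : (x + y + z) ^ 2 * kk x y z =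
    mo x y z 1 8 1 0 + mo x y z 1 8 0 1 + mo x y z 5 7 2 0 +
    mo x y z 10 7 1 1 + mo x y z 5 7 0 2 + mo x y z 12 6 3 0 +
    mo x y z 36 6 2 1 + mo x y z 36 6 1 2 + mo x y z 12 6 0 3 +
    mo x y z 18 5 4 0 + mo x y z 72 5 3 1 + mo x y z 108 5 2 2 +
    mo x y z 72 5 1 3 + mo x y z 18 5 0 4 + mo x y z 18 4 5 0 +
    mo x y z 90 4 4 1 + mo x y z 180 4 3 2 + mo x y z 180 4 2 3 +
    mo x y z 90 4 1 4 + mo x y z 18 4 0 5 + mo x y z 12 3 6 0 +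
    mo x y z 72 3 5 1 + mo x y z 180 3 4 2 + mo x y z 240 3 3 3 +
    mo x y z 180 3 2 4 + mo x y z 72 3 1 5 + mo x y z 12 3 0 6 +
    mo x y z 5 2 7 0 + mo x y z 36 2 6 1 + mo x y z 108 2 5 2 +
    mo x y z 180 2 4 3 + mo x y z 180 2 3 4 + mo x y z 108 2 2 5 +
    mo x y z 36 2 1 6 + mo x y z 5 2 0 7 + mo x y z 1 1 8 0 +
    mo x y z 10 1 7 1 + mo x y z 36 1 6 2 + mo x y z 72 1 5 3 +
    mo x y z 90 1 4 4 + mo x y z 72 1 3 5 + mo x y z 36 1 2 6 +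
    mo x y z 10 1 1 7 + mo x y z 1 1 0 8 + mo x y z 1 0 8 1 +
    mo x y z 5 0 7 2 + mo x y z 12 0 6 3 + mo x y z 18 0 5 4 +
    mo x y z 18 0 4 5 + mo x y z 12 0 3 6 + mo x y z 5 0 2 7 +
    mo x y z 1 0 1 8 := by
    simp only [mo, zsmul_eq_mul, kk]; push_cast; ring
  rw [this]
  simp only [map_add, pr_mo hx hy hz]
  norm_num [hh, mo]
  ring

lemma pr_fifth {x y z : R⟦X⟧} (hx : Supp 0 x) (hy : Supp 1 y) (hz : Supp 3 z) :
    pr 3 ((x + y + z) ^ 5) = 5 * x * kle x y z ∧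
    pr 2 ((x + y + z) ^ 5) = 10 * (x ^ 3 * y ^ 2 + x ^ 2 * z ^ 3 + y ^ 3 * z ^ 2) := by
  have : (x + y + z) ^ 5 =
    mo x y z 1 5 0 0 + mo x y z 5 4 1 0 + mo x y z 5 4 0 1 +
    mo x y z 10 3 2 0 + mo x y z 20 3 1 1 + mo x y z 10 3 0 2 +
    mo x y z 10 2 3 0 + mo x y z 30 2 2 1 + mo x y z 30 2 1 2 +
    mo x y z 10 2 0 3 + mo x y z 5 1 4 0 + mo x y z 20 1 3 1 +
    mo x y z 30 1 2 2 + mo x y z 20 1 1 3 + mo x y z 5 1 0 4 +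
    mo x y z 1 0 5 0 + mo x y z 5 0 4 1 + mo x y z 10 0 3 2 +
    mo x y z 10 0 2 3 + mo x y z 5 0 1 4 + mo x y z 1 0 0 5 := by
    simp only [mo, zsmul_eq_mul]; push_cast; ring
  rw [this]
  simp only [map_add, pr_mo hx hy hz]
  constructor
  · norm_num [kle, mo]; ring
  · norm_num [mo]; ring

lemma hh_sq (x y z : R⟦X⟧) : ∃ t, hh x y z ^ 2 * (x ^ 7 + y ^ 7 + z ^ 7) =
    5 * (10 * (x ^ 3 * y ^ 2 + x ^ 2 * z ^ 3 + y ^ 3 * z ^ 2)) ^ 5 +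
    (
    1*x^16*y^4*z^1 + 1*x^15*y^2*z^4 + 6*x^14*y^7*z^0 + 2*x^14*y^0*z^7 + 2*x^13*y^5*z^3 +
    3*x^12*y^3*z^6 + 5*x^11*y^8*z^2 + 2*x^10*y^6*z^5 + 6*x^9*y^4*z^8 + 3*x^8*y^9*z^4 +
    3*x^8*y^2*z^11 + 1*x^7*y^14*z^0 + 5*x^7*y^0*z^14 + 5*x^6*y^12*z^3 + 4*x^6*y^5*z^10 +
    1*x^5*y^10*z^6 + 4*x^5*y^3*z^13 + 4*x^4*y^15*z^2 + 5*x^4*y^8*z^9 + 2*x^4*y^1*z^16 +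
    1*x^3*y^13*z^5 + 6*x^3*y^6*z^12 + 6*x^2*y^11*z^8 + 2*x^2*y^4*z^15 + 4*x^1*y^16*z^4 +
    3*x^0*y^14*z^7 + 4*x^0*y^7*z^14) * kle x y z + 7 * t := by
  refine ⟨
    185*x^19*y^4*z^2 + 185*x^18*y^2*z^5 + 184*x^17*y^7*z^1 + 46*x^17*y^0*z^8 + 2560*x^16*y^5*z^4 +
    -71384*x^15*y^10*z^0 + 1603*x^15*y^3*z^7 + -355543*x^14*y^8*z^3 + 184*x^14*y^1*z^10 +
    -705504*x^13*y^6*z^6 + -356774*x^12*y^11*z^2 + -711542*x^12*y^4*z^9 + -1425829*x^11*y^9*z^5 +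
    -356773*x^11*y^2*z^12 + 185*x^10*y^14*z^1 + -2141024*x^10*y^7*z^8 + -71383*x^10*y^0*z^15 +
    -711541*x^9*y^12*z^4 + -1425830*x^9*y^5*z^11 + 46*x^8*y^17*z^0 + -2141023*x^8*y^10*z^7 +
    -355542*x^8*y^3*z^14 + 1602*x^7*y^15*z^3 + -2141023*x^7*y^8*z^10 + 182*x^7*y^1*z^17 +
    -705505*x^6*y^13*z^6 + -705506*x^6*y^6*z^13 + 184*x^5*y^18*z^2 + -1425828*x^5*y^11*z^9 +
    2558*x^5*y^4*z^16 + 2558*x^4*y^16*z^5 + -711544*x^4*y^9*z^12 + 184*x^4*y^2*z^19 +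
    -355541*x^3*y^14*z^8 + 1600*x^3*y^7*z^15 + 184*x^2*y^19*z^4 + -356776*x^2*y^12*z^11 +
    184*x^2*y^5*z^18 + 182*x^1*y^17*z^7 + 184*x^1*y^10*z^14 + -71384*x^0*y^15*z^10 +
    44*x^0*y^8*z^17, ?_⟩
  rw [hh, kle]; ring

lemma pr_sw {x y z w : R⟦X⟧} (hx : Supp 0 x) (hy : Supp 1 y) (hz : Supp 3 z) (hw : Supp 6 w) :
    pr 5 ((x + y + z) * w) = 0 := by
  rw [add_mul, add_mul, map_add, map_add, (hx.mul hw).pr, (hy.mul hw).pr, (hz.mul hw).pr]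
  norm_num

lemma pow_seven (s w : R⟦X⟧) : ∃ U, (s + 7 * w) ^ 7 = s ^ 7 + 49 * U :=
  ⟨s ^ 6 * w + 21 * s ^ 5 * w ^ 2 + 245 * s ^ 4 * w ^ 3 + 1715 * s ^ 3 * w ^ 4 +
    7203 * s ^ 2 * w ^ 5 + 16807 * s * w ^ 6 + 16807 * w ^ 7, by ring⟩

lemma pow_sixteen (s w N K : R⟦X⟧) (h : s ^ 7 = N + 7 * K) :
    ∃ T, (s + 7 * w) ^ 16 = N ^ 2 * s ^ 2 + 14 * (N ^ 2 * (s * w)) + 14 * (N * (s ^ 2 * K))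
      + 49 * T := by
  obtain ⟨U, hU⟩ := pow_seven s w
  rw [h] at hU
  refine ⟨(s ^ 2 + 14 * s * w) * (2 * (N + 7 * K) * U + 49 * U ^ 2) + w ^ 2 * (N + 7 * K + 49 * U) ^ 2
    + 4 * s * w * N * K + (s ^ 2 + 14 * s * w) * K ^ 2, ?_⟩
  rw [show (s + 7 * w) ^ 16 = (s + 7 * w) ^ 2 * ((s + 7 * w) ^ 7) ^ 2 by ring, hU]
  ring

end proj

lemma exists_seven (φ : ℤ⟦X⟧) (h : ∀ n, (7 : ℤ) ∣ coeff n φ) : ∃ ψ, φ = 7 * ψ := by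
  choose a ha using h
  refine ⟨PowerSeries.mk a, ?_⟩
  ext n
  rw [show (7 : ℤ⟦X⟧) = C (7 : ℤ) by simp, coeff_C_mul, coeff_mk, ha]

instance fact7 : Fact (Nat.Prime 7) := ⟨by norm_num⟩

lemma frob (φ : (ZMod 7)⟦X⟧) : φ ^ 7 = expand 7 (by norm_num) φ := by
  have h := MvPowerSeries.map_frobenius_expand 7 (by norm_num) (f := φ)
  rw [← h]
  rw [ZMod.frobenius_zmod]
  exact (congrFun (PowerSeries.map_id (R := ZMod 7)) (expand 7 (by norm_num) φ)).symm ▸ rfl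

lemma supp_pow7 (φ : (ZMod 7)⟦X⟧) : Supp 0 (φ ^ 7) := by
  intro n hn
  rw [frob, coeff_expand_of_not_dvd]
  omega

/-- reduction modulo 7 -/
noncomputable abbrev m7 : ℤ⟦X⟧ →+* (ZMod 7)⟦X⟧ := PowerSeries.map (Int.castRingHom (ZMod 7))

lemma m7_seven : m7 7 = 0 := by
  rw [map_ofNat]
  have : ((7 : ℕ) : (ZMod 7)⟦X⟧) = C ((7 : ℕ) : ZMod 7) := (map_natCast C 7).symm
  exact_mod_cast this.trans (by rw [ZMod.natCast_self, map_zero])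

lemma seven_zero : (7 : (ZMod 7)⟦X⟧) = 0 := by
  rw [← m7_seven, map_ofNat]

lemma m7_pr (r : ℕ) (φ : ℤ⟦X⟧) : m7 (pr r φ) = pr r (m7 φ) := by
  ext n
  rw [coeff_map, coeff_pr, coeff_pr, coeff_map]
  split_ifs <;> simp

lemma m7_coeff (φ : ℤ⟦X⟧) (n : ℕ) : coeff n (m7 φ) = ((coeff n φ : ℤ) : ZMod 7) := by
  rw [coeff_map]; simp

lemma Supp.m7 {r : ℕ} {φ : ℤ⟦X⟧} (h : Supp r φ) : Supp r (m7 φ) := by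
  intro n hn; rw [m7_coeff, h n hn]; simp

/-- Euler's function modulo 7 -/
noncomputable abbrev gf : (ZMod 7)⟦X⟧ := m7 ef

lemma ef_const : coeff 0 ef = 1 := by
  have h := X_pow_dvd_iff.1 (ef_dvd 0) 0 (by omega)
  rw [map_sub, eu_zero, coeff_zero_one, sub_eq_zero] at h
  exact h

lemma gf_ne : gf ≠ 0 := by
  intro h
  have := m7_coeff ef 0
  rw [show m7 ef = 0 from h, ef_const] at this
  simp at this

lemma pentagonal_mod (k : ℤ) : pentagonal k % 7 = 0 ∨ pentagonal k % 7 = 1 ∨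
    pentagonal k % 7 = 5 ∨ (pentagonal k % 7 = 2 ∧ k % 7 = 6) := by
  have h := two_mul_natCast_pentagonal k
  have h2 : (2 * (pentagonal k : ℤ)) % 7 = ((k % 7) * (3 * (k % 7) - 1)) % 7 := by
    rw [h]
    exact Int.ModEq.mul (Int.mod_modEq _ _).symm
      (Int.ModEq.sub_right _ (Int.ModEq.mul_left _ (Int.mod_modEq _ _).symm))
  have h3 : 0 ≤ k % 7 := Int.emod_nonneg _ (by norm_num)
  have h4 : k % 7 < 7 := Int.emod_lt_of_pos _ (by norm_num)
  generalize hr : k % 7 = r at *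
  interval_cases r <;> omega

lemma pr_three_ef : pr 3 ef = 0 := by
  ext n
  rw [coeff_pr, map_zero]
  split_ifs with h
  · apply coeff_pentagonalSeries_eq_zero
    rintro ⟨k, rfl⟩
    have := pentagonal_mod k
    omega
  · rfl

lemma pentagonal_49 (l : ℤ) : pentagonal (7 * l - 1) = 49 * pentagonal l + 2 := by
  have h := two_mul_natCast_pentagonal l
  have h1 := two_mul_natCast_pentagonal (7 * l - 1)
  zify
  linarith

lemma pr_two_ef : pr 2 ef = - (X ^ 2 * expand 49 (by norm_num) ef) := by
  ext n
  rw [coeff_pr, map_neg]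
  by_cases hk : ∃ l, n = pentagonal (7 * l - 1)
  · obtain ⟨l, rfl⟩ := hk
    rw [if_pos (by rw [pentagonal_49]; omega), coeff_pentagonalSeries_pentagonal, pentagonal_49,
      coeff_X_pow_mul, coeff_expand_mul, coeff_pentagonalSeries_pentagonal]
    have : (7 * l - 1).negOnePow = - l.negOnePow := by
      rw [Int.negOnePow_sub, show (7 * l) = l + 2 * (3 * l) by ring, Int.negOnePow_add,
        Int.negOnePow_two_mul]
      simp
    rw [this]; simp
  · have hr : coeff n (X ^ 2 * expand 49 (by norm_num) ef) = 0 := by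
      by_contra hne
      rw [coeff_X_pow_mul'] at hne
      split_ifs at hne with h2
      · rw [coeff_expand] at hne
        split_ifs at hne with h3
        · rw [← ne_eq, ne_eq, coeff_pentagonalSeries_eq_zero_iff, not_not] at hne
          obtain ⟨l, hl⟩ := hne
          exact hk ⟨l, by rw [pentagonal_49]; omega⟩
        · exact hne rfl
      · exact hne rfl
    rw [hr, neg_zero]
    split_ifs with h
    · apply coeff_pentagonalSeries_eq_zero
      rintro ⟨k, rfl⟩
      have := pentagonal_mod k
      exact hk ⟨(k + 1) / 7, by congr 1; omega⟩
    · rfl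


/-- generating function of partitions -/
noncomputable def pg : ℤ⟦X⟧ := PowerSeries.mk fun n => (p n : ℤ)

open scoped PowerSeries.WithPiTopology in
lemma pg_mul_ef : ef * pg = 1 := by
  have h1 := Nat.Partition.hasProd_powerSeriesMk_card_restricted ℤ (fun _ => True)
  have h2 := WithPiTopology.hasProd_one_sub_X_pow ℤ
  have h3 := h2.mul h1
  have h4 : (PowerSeries.mk fun n => ((Nat.Partition.restricted n (fun _ => True)).card : ℤ)) = pg := by
    ext n; simp [pg, p, Nat.Partition.restricted]
  rw [h4] at h3
  refine h3.unique ?_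
  convert hasProd_one using 2 with i
  simp only [if_true]
  rw [mul_comm]
  simp_rw [pow_mul]
  exact WithPiTopology.tsum_pow_mul_one_sub_of_constantCoeff_eq_zero (by simp)

lemma exists_dissection : ∃ x y z w : ℤ⟦X⟧, Supp 0 x ∧ Supp 1 y ∧ Supp 3 z ∧ Supp 6 w ∧
    ef ^ 3 = x + y + z + 7 * w ∧ coeff 0 x = 1 := by
  obtain ⟨w, hw⟩ := exists_seven (pr 6 (ef ^ 3)) (by
    intro n
    rw [coeff_pr]
    split_ifs with h
    · exact jac_six n h
    · simp)
  refine ⟨pr 0 (ef ^ 3), pr 1 (ef ^ 3), pr 3 (ef ^ 3), w, supp_pr _ _, supp_pr _ _, supp_pr _ _,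
    ?_, ?_, ?_⟩
  · intro n hn
    have := supp_pr 6 (ef ^ 3) n hn
    rw [hw, show (7 : ℤ⟦X⟧) = C (7 : ℤ) by simp, coeff_C_mul] at this
    omega
  · rw [← hw]
    ext n
    simp only [map_add, coeff_pr]
    have h := jac_zero n
    have : n % 7 < 7 := Nat.mod_lt _ (by norm_num)
    generalize n % 7 = r at *
    interval_cases r <;> simp_all
  · rw [coeff_pr]
    have := ef_const
    rw [coeff_zero_eq_constantCoeff_apply] at this ⊢
    simp [this]

lemma exists_frob : ∃ E F : ℤ⟦X⟧, Supp 0 E ∧ coeff 0 E = 1 ∧ ef ^ 7 = E + 7 * F := by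
  obtain ⟨F, hF⟩ := exists_seven (ef ^ 7 - pr 0 (ef ^ 7)) (by
    intro n
    rw [map_sub, coeff_pr]
    split_ifs with h
    · simp
    · have := supp_pow7 gf n h
      rw [← map_pow, m7_coeff, ZMod.intCast_zmod_eq_zero_iff_dvd] at this
      simpa using this)
  refine ⟨pr 0 (ef ^ 7), F, supp_pr _ _, ?_, ?_⟩
  · rw [coeff_pr]
    have := ef_const
    rw [coeff_zero_eq_constantCoeff_apply] at this ⊢
    simp [this]
  · rw [← hF]; ring

/-- The key quotient: `pr 5 pg = 7 Q` with `Q` known modulo 7. -/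
lemma exists_quot : ∃ Q : ℤ⟦X⟧, ∃ x y z : (ZMod 7)⟦X⟧, Supp 0 x ∧ Supp 1 y ∧ Supp 3 z ∧
    gf ^ 3 = x + y + z ∧ coeff 0 x = 1 ∧ pr 5 pg = 7 * Q ∧
    gf ^ 49 * m7 Q = 2 * (gf ^ 21 * hh x y z) := by
  obtain ⟨x, y, z, w, hx, hy, hz, hw, hJ, hx0⟩ := exists_dissection
  obtain ⟨E, F, hE, hE0, hEF⟩ := exists_frob
  obtain ⟨U, hU⟩ := pow_seven E F
  obtain ⟨T, hT⟩ := pow_sixteen (x + y + z) w (x ^ 7 + y ^ 7 + z ^ 7) (kk x y z) (kk_spec x y z)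
  have hN : Supp 0 (x ^ 7 + y ^ 7 + z ^ 7) := ((hx.pow 7).add (hy.pow 7)).add (hz.pow 7)
  have hE7 : Supp 0 (E ^ 7) := hE.pow 7
  have h1 : E ^ 7 * pg + 49 * (U * pg) = (x + y + z + 7 * w) ^ 16 := by
    have : ef ^ 49 * pg = (ef ^ 3) ^ 16 := by
      linear_combination ef ^ 48 * pg_mul_ef
    rw [← hJ, ← this, show ef ^ 49 = (ef ^ 7) ^ 7 by ring, hEF, hU]; ring
  rw [hT] at h1
  have nat (c : ℕ) (φ : ℤ⟦X⟧) : pr 5 ((c : ℤ⟦X⟧) * φ) = c * pr 5 φ := by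
    rw [← nsmul_eq_mul, map_nsmul, nsmul_eq_mul]
  have h2 := congrArg (pr 5) h1
  have n49 := nat 49
  have n14 := nat 14
  push_cast at n49 n14
  have hN2 : Supp 0 ((x ^ 7 + y ^ 7 + z ^ 7) ^ 2) := hN.pow 2
  rw [map_add, map_add, map_add, map_add, n49, n49, n14, n14, pr_mul hE7, pr_mul hN2, pr_mul hN2,
    pr_mul hN, pr_sq hx hy hz, pr_sk hx hy hz, pr_sw hx hy hz hw] at h2
  have hu : IsUnit (E ^ 7) := by
    apply IsUnit.pow
    rw [PowerSeries.isUnit_iff_constantCoeff, ← coeff_zero_eq_constantCoeff_apply, hE0]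
    exact isUnit_one
  have h7 : (7 : ℤ⟦X⟧) ∣ pr 5 pg := by
    rw [← hu.dvd_mul_left]
    refine ⟨2 * ((x ^ 7 + y ^ 7 + z ^ 7) * hh x y z) + 7 * pr 5 T - 7 * pr 5 (U * pg), ?_⟩
    linear_combination h2
  obtain ⟨Q, hQ⟩ := h7
  have hs : gf ^ 3 = m7 x + m7 y + m7 z := by
    have := congrArg m7 hJ
    rw [map_add, map_mul, m7_seven, zero_mul, add_zero, map_pow, map_add, map_add] at this
    exact this
  refine ⟨Q, m7 x, m7 y, m7 z, hx.m7, hy.m7, hz.m7, hs, ?_, hQ, ?_⟩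
  · rw [m7_coeff, hx0]; simp
  · have h3 : E ^ 7 * Q = 2 * ((x ^ 7 + y ^ 7 + z ^ 7) * hh x y z) + 7 * (pr 5 T - pr 5 (U * pg)) := by
      have h70 : (7 : ℤ⟦X⟧) ≠ 0 := by
        intro h
        have h' := congrArg (constantCoeff (R := ℤ)) h
        rw [map_ofNat, map_zero] at h'
        norm_num at h'
      apply mul_left_cancel₀ h70
      rw [hQ] at h2
      linear_combination h2
    have h4 := congrArg m7 h3
    have hhm : m7 (hh x y z) = hh (m7 x) (m7 y) (m7 z) := by
      simp only [hh, map_add, map_mul, map_pow, map_ofNat]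
    have hEm : m7 E = gf ^ 7 := by
      have := congrArg m7 hEF
      rw [map_add, map_mul, m7_seven, zero_mul, add_zero, map_pow] at this
      exact this.symm
    have hNm : m7 (x ^ 7 + y ^ 7 + z ^ 7) = gf ^ 21 := by
      have := congrArg m7 (kk_spec x y z)
      rw [map_add _ _ (7 * _), map_mul, m7_seven, zero_mul, add_zero, map_pow, map_add, map_add,
        ← hs] at this
      rw [← this]; ring
    rw [map_add, map_mul m7 7, m7_seven, zero_mul, add_zero, map_mul, map_mul, map_mul, hhm, hNm,
      map_pow, hEm, map_ofNat] at h4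
    rw [← h4]; ring

lemma frob49 (φ : (ZMod 7)⟦X⟧) : φ ^ 49 = expand 49 (by norm_num) φ := by
  rw [show φ ^ 49 = (φ ^ 7) ^ 7 by ring, frob, frob]
  exact (expand_mul 7 (by norm_num) 7 (by norm_num) φ).symm

lemma hh_eq {x y z : (ZMod 7)⟦X⟧} (hx : Supp 0 x) (hy : Supp 1 y) (hz : Supp 3 z)
    (hs : gf ^ 3 = x + y + z) (hx0 : coeff 0 x = 1) :
    hh x y z = 3 * (X ^ 5 * gf ^ 147) ∨ hh x y z = - (3 * (X ^ 5 * gf ^ 147)) := by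
  obtain ⟨h3, h2⟩ := pr_fifth hx hy hz
  have h14 : Supp 0 (gf ^ 14) := by
    rw [show gf ^ 14 = (gf ^ 2) ^ 7 by ring]; exact supp_pow7 _
  have h15 : (x + y + z) ^ 5 = gf ^ 14 * gf := by rw [← hs]; ring
  have hxn : x ≠ 0 := by
    rintro rfl
    simp at hx0
  rw [h15, pr_mul h14, ← m7_pr, pr_three_ef, map_zero, mul_zero] at h3
  rw [h15, pr_mul h14, ← m7_pr, pr_two_ef, map_neg, map_mul, map_expand, ← frob49, map_pow,
    map_X] at h2
  have h5 : (5 : (ZMod 7)⟦X⟧) ≠ 0 := by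
    intro h
    have : (1 : (ZMod 7)⟦X⟧) = 0 := by
      linear_combination 3 * h - 2 * seven_zero
    exact one_ne_zero this
  have hk : kle x y z = 0 := by
    have := mul_eq_zero.1 h3.symm
    rcases this with h | h
    · exact absurd h (mul_ne_zero h5 hxn)
    · exact h
  obtain ⟨t, ht⟩ := hh_sq x y z
  have hN : x ^ 7 + y ^ 7 + z ^ 7 = gf ^ 21 := by
    have := kk_spec x y z
    rw [← hs] at this
    linear_combination -this - kk x y z * seven_zero
  rw [hk, mul_zero, add_zero, seven_zero, zero_mul, add_zero, hN, ← h2] at ht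
  have hsq : hh x y z ^ 2 = (3 * (X ^ 5 * gf ^ 147)) ^ 2 := by
    apply mul_right_cancel₀ (pow_ne_zero 21 gf_ne)
    linear_combination ht - 2 * X ^ 10 * gf ^ 315 * seven_zero
  exact sq_eq_sq_iff_eq_or_eq_neg.1 hsq

lemma coeff_main (n : ℕ) : coeff (49 * n + 40) (X ^ 5 * gf ^ 119) = 0 := by
  rw [show gf ^ 119 = (((gf ^ 2) ^ 7) * gf ^ 3) ^ 7 by ring, frob,
    show 49 * n + 40 = 7 * (7 * n + 5) + 5 by ring, coeff_X_pow_mul, coeff_expand_mul, coeff_mul]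
  refine Finset.sum_eq_zero fun ij hij => ?_
  rw [Finset.HasAntidiagonal.mem_antidiagonal] at hij
  by_cases h : ij.1 % 7 = 0
  · rw [← map_pow m7 ef 3, m7_coeff, jac_zero _ (by omega)]
    simp
  · rw [supp_pow7 _ _ h, zero_mul]

/-- Ramanujan-type congruence: `p(49n + 40) ≡ 0 (mod 49)` for all `n ≥ 0`. -/
theorem p_49n_add_40_mod_49 (n : ℕ) : p (49 * n + 40) % 49 = 0 := by
  obtain ⟨Q, x, y, z, hx, hy, hz, hs, hx0, hQ, hm⟩ := exists_quot
  have hQ0 : coeff (49 * n + 40) (m7 Q) = 0 := by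
    have g49 := pow_ne_zero 49 gf_ne
    rcases hh_eq hx hy hz hs hx0 with h | h
    · have : m7 Q = C (6 : ZMod 7) * (X ^ 5 * gf ^ 119) := by
        apply mul_left_cancel₀ g49
        rw [hm, h, show C (6 : ZMod 7) = 6 from map_ofNat C 6]; ring
      rw [this, coeff_C_mul, coeff_main, mul_zero]
    · have : m7 Q = C (-6 : ZMod 7) * (X ^ 5 * gf ^ 119) := by
        apply mul_left_cancel₀ g49
        rw [hm, h, map_neg, show C (6 : ZMod 7) = 6 from map_ofNat C 6]; ring
      rw [this, coeff_C_mul, coeff_main, mul_zero]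
  rw [m7_coeff, ZMod.intCast_zmod_eq_zero_iff_dvd] at hQ0
  have hc := congrArg (coeff (49 * n + 40)) hQ
  rw [coeff_pr, if_pos (by omega), show (7 : ℤ⟦X⟧) = C (7 : ℤ) by simp, coeff_C_mul, pg,
    coeff_mk] at hc
  push_cast at hQ0
  omega
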